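/- In a consecutive transition with n moving labels, executed one after another in any given order, at most 7n overlaps occur during the transition. -/

import Mathlib

open Set

/-- The closed axis-aligned unit square with lower-left corner `a`. -/
def unitSq (a : ℝ × ℝ) : Set (ℝ × ℝ) :=
  Set.Icc a.1 (a.1 + 1) ×ˢ Set.Icc a.2 (a.2 + 1)

/-- Two unit squares, given by their lower-left corners, overlap if their interiors intersect. -/
def Overlap (a b : ℝ × ℝ) : Prop :=
  (interior (unitSq a) ∩ interior (unitSq b)).Nonempty

/-- `a` is the lower-left corner of one of the four candidate positions of point `p`
(the four closed unit squares having `p` as a corner). -/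
def IsCandidate (p a : ℝ × ℝ) : Prop :=
  a = p ∨ a = (p.1 - 1, p.2) ∨ a = (p.1, p.2 - 1) ∨ a = (p.1 - 1, p.2 - 1)

/-- Two unit squares (given by lower-left corners) share an edge. -/
def SharesEdge (a b : ℝ × ℝ) : Prop :=
  (a.1 = b.1 ∧ (a.2 - b.2 = 1 ∨ b.2 - a.2 = 1)) ∨
  (a.2 = b.2 ∧ (a.1 - b.1 = 1 ∨ b.1 - a.1 = 1))

/-- A movement of the unit-square label of point `p` from candidate position `S` to candidate
position `E`.  If `S` and `E` share an edge (a non-diagonal movement) we set `I = E` and the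
label translates directly from `S` to `E`; if `S` and `E` are diagonally opposite (a diagonal
movement) the label translates through the specified intermediate candidate position `I`,
which shares an edge with both `S` and `E`. -/
structure Movement where
  p : ℝ × ℝ
  S : ℝ × ℝ
  I : ℝ × ℝ
  E : ℝ × ℝ
  candS : IsCandidate p S
  candI : IsCandidate p I
  candE : IsCandidate p E
  legs : (I = E ∧ SharesEdge S E) ∨
    (SharesEdge S I ∧ SharesEdge I E ∧ S.1 ≠ E.1 ∧ S.2 ≠ E.2)

/-- A movement is diagonal if the start and end positions are diagonally opposite
(equivalently, the intermediate position differs from the end position). -/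
def Movement.Diagonal (m : Movement) : Prop := m.I ≠ m.E

/-- Position (lower-left corner) of a moving label at time `t` after the start of its movement:
unit-speed axis-aligned translation, one unit of time per axis-aligned leg; the label rests at
its start position before the movement begins and at its end position after it is finished. -/
noncomputable def Movement.pos (m : Movement) (t : ℝ) : ℝ × ℝ :=
  if t ≤ 0 then m.S
  else if t ≤ 1 then m.S + t • (m.I - m.S)
  else if t ≤ 2 then m.I + (t - 1) • (m.E - m.I)
  else m.E

/-- Duration of a movement: one unit of time per axis-aligned translation. -/
noncomputable def Movement.dur (m : Movement) : ℝ := if m.I = m.E then 1 else 2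

/-- A transition instance: finitely many stationary labels (given by their lower-left corners)
and `n` moving labels, each with a prescribed movement, such that the labeling `L₁` formed by
the stationary labels together with the start positions of the moving labels is overlap-free,
and the labeling `L₂` formed by the stationary labels together with the end positions of the
moving labels is overlap-free. -/
structure TransitionInstance (k n : ℕ) where
  stat : Fin k → ℝ × ℝ
  mov : Fin n → Movement
  free_start : ∀ a b : Fin k ⊕ Fin n, a ≠ b →
    ¬ Overlap (Sum.elim stat (fun j => (mov j).S) a)
      (Sum.elim stat (fun j => (mov j).S) b)
  free_end : ∀ a b : Fin k ⊕ Fin n, a ≠ b →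
    ¬ Overlap (Sum.elim stat (fun j => (mov j).E) a)
      (Sum.elim stat (fun j => (mov j).E) b)

/-- A schedule `τ` of starting times is consecutive if the execution intervals of the movements
are pairwise non-overlapping, i.e. the movements are executed one after another in some order. -/
def Consecutive {k n : ℕ} (T : TransitionInstance k n) (τ : Fin n → ℝ) : Prop :=
  ∀ i j : Fin n, i ≠ j →
    τ i + (T.mov i).dur ≤ τ j ∨ τ j + (T.mov j).dur ≤ τ i

/-- Position (lower-left corner) of each label at global time `t`, when moving label `j`
starts its movement at time `τ j`; stationary labels never move. -/
noncomputable def traj {k n : ℕ} (T : TransitionInstance k n) (τ : Fin n → ℝ) (t : ℝ) :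
    Fin k ⊕ Fin n → ℝ × ℝ :=
  Sum.elim T.stat (fun j => (T.mov j).pos (t - τ j))

/-- The number of overlaps during the transition: the number of unordered pairs of distinct
labels whose interiors intersect at some moment. -/
noncomputable def overlapCount {k n : ℕ} (T : TransitionInstance k n) (τ : Fin n → ℝ) : ℕ :=
  Set.ncard {q : Sym2 (Fin k ⊕ Fin n) | ∃ a b : Fin k ⊕ Fin n,
    q = s(a, b) ∧ a ≠ b ∧ ∃ t : ℝ, Overlap (traj T τ t a) (traj T τ t b)}

theorem overlap_iff (a b : ℝ × ℝ) : Overlap a b ↔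
    (a.1 < b.1 + 1 ∧ b.1 < a.1 + 1) ∧ (a.2 < b.2 + 1 ∧ b.2 < a.2 + 1) := by
  unfold Overlap unitSq
  rw [interior_prod_eq, interior_prod_eq, interior_Icc, interior_Icc, interior_Icc, interior_Icc]
  constructor
  · rintro ⟨⟨x, y⟩, ⟨⟨h1, h2⟩, ⟨h3, h4⟩⟩, ⟨⟨h5, h6⟩, ⟨h7, h8⟩⟩⟩
    simp only at *
    refine ⟨⟨?_, ?_⟩, ?_, ?_⟩ <;> linarith
  · rintro ⟨⟨h1, h2⟩, h3, h4⟩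
    refine ⟨((a.1 + b.1 + 1) / 2, (a.2 + b.2 + 1) / 2), ⟨⟨?_, ?_⟩, ⟨?_, ?_⟩⟩,
      ⟨⟨?_, ?_⟩, ⟨?_, ?_⟩⟩⟩ <;> simp only <;> linarith

theorem overlap_comm' {a b : ℝ × ℝ} (h : Overlap a b) : Overlap b a := by
  unfold Overlap at *
  rwa [Set.inter_comm]

/-- Overlap with an intermediate position of a leg implies overlap with one of its ends. -/
theorem overlap_leg {a b c : ℝ × ℝ} (hab : SharesEdge a b ∨ a = b) {t : ℝ} (h0 : 0 ≤ t)
    (h1 : t ≤ 1) (h : Overlap (a + t • (b - a)) c) : Overlap a c ∨ Overlap b c := by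
  rcases hab with hab | rfl
  swap
  · simpa using h
  rw [overlap_iff] at *
  rw [overlap_iff]
  simp only [Prod.fst_add, Prod.snd_add, Prod.smul_fst, Prod.smul_snd, Prod.fst_sub,
    Prod.snd_sub, smul_eq_mul] at h
  obtain ⟨⟨h2, h3⟩, h4, h5⟩ := h
  rcases hab with ⟨e, e' | e'⟩ | ⟨e, e' | e'⟩
  · have hb : b.2 = a.2 - 1 := by linarith
    simp only [← e, hb] at h2 h3 h4 h5 ⊢
    ring_nf at h2 h3 h4 h5
    rcases lt_or_ge c.2 (a.2 + -1 + 1) with hh | hh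
    · right; refine ⟨⟨?_, ?_⟩, ?_, ?_⟩ <;> linarith
    · left; refine ⟨⟨?_, ?_⟩, ?_, ?_⟩ <;> linarith
  · have hb : b.2 = a.2 + 1 := by linarith
    simp only [← e, hb] at h2 h3 h4 h5 ⊢
    ring_nf at h2 h3 h4 h5
    rcases lt_or_ge a.2 c.2 with hh | hh
    · right; refine ⟨⟨?_, ?_⟩, ?_, ?_⟩ <;> linarith
    · left; refine ⟨⟨?_, ?_⟩, ?_, ?_⟩ <;> linarith
  · have hb : b.1 = a.1 - 1 := by linarith
    simp only [← e, hb] at h2 h3 h4 h5 ⊢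
    ring_nf at h2 h3 h4 h5
    rcases lt_or_ge c.1 (a.1 + -1 + 1) with hh | hh
    · right; refine ⟨⟨?_, ?_⟩, ?_, ?_⟩ <;> linarith
    · left; refine ⟨⟨?_, ?_⟩, ?_, ?_⟩ <;> linarith
  · have hb : b.1 = a.1 + 1 := by linarith
    simp only [← e, hb] at h2 h3 h4 h5 ⊢
    ring_nf at h2 h3 h4 h5
    rcases lt_or_ge a.1 c.1 with hh | hh
    · right; refine ⟨⟨?_, ?_⟩, ?_, ?_⟩ <;> linarith
    · left; refine ⟨⟨?_, ?_⟩, ?_, ?_⟩ <;> linarith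

theorem Movement.edgeSI (m : Movement) : SharesEdge m.S m.I := by
  rcases m.legs with ⟨h, h'⟩ | h
  · rwa [h]
  · exact h.1

/-- Overlapping the moving label means overlapping its start, intermediate or end position. -/
theorem Movement.overlap_pos (m : Movement) (t : ℝ) {c : ℝ × ℝ} (h : Overlap (m.pos t) c) :
    Overlap m.S c ∨ Overlap m.I c ∨ Overlap m.E c := by
  unfold Movement.pos at h
  split_ifs at h with h1 h2 h3
  · exact Or.inl h
  · rcases overlap_leg (Or.inl m.edgeSI) (by linarith) h2 h with h | h <;> tauto
  · have : SharesEdge m.I m.E ∨ m.I = m.E := by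
      rcases m.legs with h | h
      · exact Or.inr h.1
      · exact Or.inl h.2.1
    rcases overlap_leg this (by linarith) (by linarith) h with h | h <;> tauto
  · exact Or.inr (Or.inr h)

theorem Movement.pos_of_nonpos (m : Movement) {t : ℝ} (h : t ≤ 0) : m.pos t = m.S := by
  unfold Movement.pos; rw [if_pos h]

theorem Movement.pos_of_dur (m : Movement) {t : ℝ} (h : m.dur < t) : m.pos t = m.E := by
  unfold Movement.pos
  unfold Movement.dur at h
  by_cases hI : m.I = m.E
  · rw [if_pos hI] at h
    rw [if_neg (by linarith), if_neg (by linarith), hI]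
    simp
  · rw [if_neg hI] at h
    rw [if_neg (by linarith), if_neg (by linarith), if_neg (by linarith)]

/-- At most four pairwise non-overlapping squares overlap a given one. -/
theorem card_four {ι : Type*} [Fintype ι] (f : ι → ℝ × ℝ)
    (hf : ∀ a b, a ≠ b → ¬ Overlap (f a) (f b)) (q : ℝ × ℝ) (s : Finset ι)
    (hs : ∀ c ∈ s, Overlap q (f c)) : s.card ≤ 4 := by
  classical
  have := Finset.card_le_card_of_injOn (s := s) (t := (Finset.univ : Finset (Bool × Bool)))
    (fun c => (decide ((f c).1 < q.1), decide ((f c).2 < q.2))) (by simp) (by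
      intro a ha b hb hab
      by_contra hne
      apply hf a b hne
      have h1 := hs a ha
      have h2 := hs b hb
      rw [overlap_iff] at *
      simp only [Prod.mk.injEq, decide_eq_decide] at hab
      obtain ⟨e1, e2⟩ := hab
      refine ⟨?_, ?_⟩
      · by_cases hh : (f a).1 < q.1
        · have := e1.1 hh
          constructor <;> linarith
        · have := mt e1.2 hh
          push Not at hh this
          constructor <;> linarith
      · by_cases hh : (f a).2 < q.2
        · have := e2.1 hh
          constructor <;> linarith
        · have := mt e2.2 hh
          push Not at hh this
          constructor <;> linarith)
  simpa using this

/-- At most two pairwise non-overlapping squares overlap `I` and not the adjacent `S`. -/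
theorem card_two {ι : Type*} [Fintype ι] (f : ι → ℝ × ℝ)
    (hf : ∀ a b, a ≠ b → ¬ Overlap (f a) (f b)) (S I : ℝ × ℝ) (hSI : SharesEdge S I)
    (s : Finset ι)
    (hs : ∀ c ∈ s, Overlap I (f c) ∧ ¬ Overlap S (f c)) : s.card ≤ 2 := by
  classical
  rcases hSI with ⟨e, e'⟩ | ⟨e, e'⟩
  · have := Finset.card_le_card_of_injOn (s := s) (t := (Finset.univ : Finset Bool))
      (fun c => decide ((f c).1 < I.1)) (fun _ _ => Finset.mem_coe.2 (Finset.mem_univ _)) (by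
        intro a ha b hb hab
        by_contra hne
        apply hf a b hne
        obtain ⟨h1, h1'⟩ := hs a ha
        obtain ⟨h2, h2'⟩ := hs b hb
        simp only [decide_eq_decide] at hab
        rw [overlap_iff] at *
        by_cases hh : (f a).1 < I.1
        · have := hab.1 hh
          grind
        · have := mt hab.2 hh
          grind)
    simpa using this
  · have := Finset.card_le_card_of_injOn (s := s) (t := (Finset.univ : Finset Bool))
      (fun c => decide ((f c).2 < I.2)) (fun _ _ => Finset.mem_coe.2 (Finset.mem_univ _)) (by
        intro a ha b hb hab
        by_contra hne
        apply hf a b hne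
        obtain ⟨h1, h1'⟩ := hs a ha
        obtain ⟨h2, h2'⟩ := hs b hb
        simp only [decide_eq_decide] at hab
        rw [overlap_iff] at *
        by_cases hh : (f a).2 < I.2
        · have := hab.1 hh
          grind
        · have := mt hab.2 hh
          grind)
    simpa using this

/-- At most one of pairwise non-overlapping squares overlaps `I` and neither `S` nor `E`. -/
theorem card_one {ι : Type*} (f : ι → ℝ × ℝ)
    (hf : ∀ a b, a ≠ b → ¬ Overlap (f a) (f b)) (m : Movement) (s : Finset ι)
    (hs : ∀ c ∈ s, Overlap m.I (f c) ∧ ¬ Overlap m.S (f c) ∧ ¬ Overlap m.E (f c)) :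
    s.card ≤ 1 := by
  classical
  rw [Finset.card_le_one]
  intro a ha b hb
  by_contra hne
  apply hf a b hne
  obtain ⟨h1, h1', h1''⟩ := hs a ha
  obtain ⟨h2, h2', h2''⟩ := hs b hb
  rcases m.legs with ⟨h, _⟩ | ⟨h3, h4, h5, h6⟩
  · exact absurd (h ▸ h1) h1''
  · rw [overlap_iff] at *
    rcases h3 with ⟨e, e'⟩ | ⟨e, e'⟩ <;> rcases h4 with ⟨g, g'⟩ | ⟨g, g'⟩
    · exact absurd (e.trans g) h5
    · grind
    · grind
    · exact absurd (e.trans g) h6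

/-- The labels `c` whose overlap with the moving label `l` is charged to `l`. -/
def Charged {k n : ℕ} (T : TransitionInstance k n) (l : Fin n) (c : Fin k ⊕ Fin n) : Prop :=
  c ≠ Sum.inr l ∧
  (Overlap (T.mov l).I (Sum.elim T.stat (fun j => (T.mov j).S) c) ∨
   Overlap (T.mov l).E (Sum.elim T.stat (fun j => (T.mov j).S) c) ∨
   (Overlap (T.mov l).I (Sum.elim T.stat (fun j => (T.mov j).E) c) ∧
    ¬ Overlap (T.mov l).S (Sum.elim T.stat (fun j => (T.mov j).E) c)))

open Classical in
theorem card_charged {k n : ℕ} (T : TransitionInstance k n) (l : Fin n) :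
    (Finset.univ.filter (Charged T l)).card ≤ 7 := by
  set f := Sum.elim T.stat (fun j => (T.mov j).S) with hf
  set g := Sum.elim T.stat (fun j => (T.mov j).E) with hg
  set m := T.mov l with hm
  let A := Finset.univ.filter (fun c => c ≠ Sum.inr l ∧ Overlap m.I (f c))
  let B := Finset.univ.filter (fun c => Overlap m.E (f c))
  let C := Finset.univ.filter (fun c => c ≠ Sum.inr l ∧ Overlap m.I (g c) ∧ ¬ Overlap m.S (g c))
  have hA : A.card ≤ 2 := by
    apply card_two f T.free_start m.S m.I m.edgeSI
    intro c hc
    obtain ⟨h1, h2⟩ := (Finset.mem_filter.1 hc).2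
    exact ⟨h2, T.free_start (Sum.inr l) c h1.symm⟩
  have hB : B.card ≤ 4 := by
    apply card_four f T.free_start m.E
    intro c hc
    exact (Finset.mem_filter.1 hc).2
  have hC : C.card ≤ 1 := by
    apply card_one g T.free_end m
    intro c hc
    obtain ⟨h1, h2, h3⟩ := (Finset.mem_filter.1 hc).2
    exact ⟨h2, h3, T.free_end (Sum.inr l) c h1.symm⟩
  have hsub : Finset.univ.filter (Charged T l) ⊆ A ∪ (B ∪ C) := by
    intro c hc
    obtain ⟨h1, h2⟩ := (Finset.mem_filter.1 hc).2
    simp only [A, B, C, Finset.mem_union, Finset.mem_filter, Finset.mem_univ, true_and]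
    tauto
  have h1 := Finset.card_le_card hsub
  have h2 := Finset.card_union_le A (B ∪ C)
  have h3 := Finset.card_union_le B C
  omega

theorem charged_stat {k n : ℕ} (T : TransitionInstance k n) (l : Fin n) (c : Fin k) (t : ℝ)
    (h : Overlap ((T.mov l).pos t) (T.stat c)) : Charged T l (Sum.inl c) := by
  refine ⟨by simp, ?_⟩
  rcases (T.mov l).overlap_pos t h with h | h | h
  · exact absurd h (T.free_start (Sum.inr l) (Sum.inl c) (by simp))
  · exact Or.inl h
  · exact Or.inr (Or.inl h)

theorem charged_mov {k n : ℕ} (T : TransitionInstance k n) (τ : Fin n → ℝ) (i j : Fin n)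
    (hij : i ≠ j) (hlt : τ i + (T.mov i).dur ≤ τ j) (t : ℝ)
    (h : Overlap ((T.mov i).pos (t - τ i)) ((T.mov j).pos (t - τ j))) :
    Charged T i (Sum.inr j) ∨ Charged T j (Sum.inr i) := by
  have hs := T.free_start (Sum.inr i) (Sum.inr j) (by simpa using hij)
  have he := T.free_end (Sum.inr j) (Sum.inr i) (by simpa using hij.symm)
  have hij' : (Sum.inr i : Fin k ⊕ Fin n) ≠ Sum.inr j := by simpa using hij
  rcases le_or_gt t (τ j) with ht | ht
  · rw [(T.mov j).pos_of_nonpos (by linarith)] at h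
    left
    refine ⟨hij'.symm, ?_⟩
    rcases (T.mov i).overlap_pos _ h with h | h | h
    · exact absurd h hs
    · exact Or.inl h
    · exact Or.inr (Or.inl h)
  · rw [(T.mov i).pos_of_dur (by linarith)] at h
    by_cases hS : Overlap (T.mov j).S (T.mov i).E
    · left
      exact ⟨hij'.symm, Or.inr (Or.inl (overlap_comm' hS))⟩
    · right
      refine ⟨hij', ?_⟩
      rcases (T.mov j).overlap_pos _ (overlap_comm' h) with h | h | h
      · exact absurd h hS
      · exact Or.inr (Or.inr ⟨h, hS⟩)
      · exact absurd h he

/-- In a consecutive transition with `n` moving labels, executed one after another in any given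
order, at most `7 n` overlaps occur during the transition. -/
theorem consecutive_overlaps_le {k n : ℕ} (T : TransitionInstance k n) (τ : Fin n → ℝ)
    (hcons : Consecutive T τ) :
    overlapCount T τ ≤ 7 * n := by
  classical
  let F : Finset (Sym2 (Fin k ⊕ Fin n)) := Finset.univ.biUnion
    (fun l : Fin n => (Finset.univ.filter (Charged T l)).image (fun c => s(Sum.inr l, c)))
  have hF : F.card ≤ 7 * n := by
    have := Finset.card_biUnion_le_card_mul (Finset.univ : Finset (Fin n))
      (fun l : Fin n => (Finset.univ.filter (Charged T l)).image (fun c => s(Sum.inr l, c))) 7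
      (fun l _ => Finset.card_image_le.trans (card_charged T l))
    rw [Finset.card_univ, Fintype.card_fin] at this
    rw [mul_comm]
    exact this
  have hmem : ∀ l c, Charged T l c → s(Sum.inr l, c) ∈ F := by
    intro l c h
    refine Finset.mem_biUnion.2 ⟨l, Finset.mem_univ _, Finset.mem_image.2 ⟨c, ?_, rfl⟩⟩
    exact Finset.mem_filter.2 ⟨Finset.mem_univ _, h⟩
  refine le_trans ?_ hF
  unfold overlapCount
  rw [← Set.ncard_coe_finset]
  apply Set.ncard_le_ncard _ F.finite_toSet
  rintro q ⟨a, b, rfl, hab, t, h⟩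
  rw [Finset.mem_coe]
  rcases a with a | a <;> rcases b with b | b
  · have hn : ¬ Overlap (T.stat a) (T.stat b) := T.free_start (Sum.inl a) (Sum.inl b) hab
    exact absurd h hn
  · rw [Sym2.eq_swap]
    exact hmem _ _ (charged_stat T b a _ (overlap_comm' h))
  · exact hmem _ _ (charged_stat T a b _ h)
  · have hab' : a ≠ b := fun e => hab (by rw [e])
    rcases hcons a b hab' with hlt | hlt
    · rcases charged_mov T τ a b hab' hlt t h with h | h
      · exact hmem _ _ h
      · rw [Sym2.eq_swap]
        exact hmem _ _ h
    · rcases charged_mov T τ b a hab'.symm hlt t (overlap_comm' h) with h | h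
      · rw [Sym2.eq_swap]
        exact hmem _ _ h
      · exact hmem _ _ h
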